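/- arXiv:2507.21784 — 3 statements merged into one kernel-verified Lean document; each statement's English description precedes it below -/
import Mathlib

section
/- Let $G$ be a finite simple graph with $n \ge 1$ vertices, $m$ edges, and h-index $h$. Then $h \ge m/n$. -/
/-- The complementary cumulative degree histogram (ccdh) of a graph:
`C(d) = |{v ∈ V : deg(v) ≥ d}|`. -/
noncomputable def ccdh {V : Type*} [Fintype V] (G : SimpleGraph V) [DecidableRel G.Adj]
    (d : ℕ) : ℕ :=
  {v : V | d ≤ G.degree v}.ncard

/-- The h-index of a graph: the largest `d ∈ [n]` with `C(d) ≥ d` (and `0` if none). -/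
noncomputable def hIndex {V : Type*} [Fintype V] (G : SimpleGraph V) [DecidableRel G.Adj] : ℕ :=
  ((Finset.Icc 1 (Fintype.card V)).filter fun d => d ≤ ccdh G d).sup id

/-- For a graph with `n ≥ 1` vertices, `m` edges and h-index `h`, we have `h ≥ m/n`. -/
theorem hIndex_ge_density {V : Type*} [Fintype V] (G : SimpleGraph V) [DecidableRel G.Adj]
    (n m : ℕ) (hn : n = Fintype.card V) (hn1 : 1 ≤ n) (hm : m = G.edgeSet.ncard) :
    (m : ℝ) / (n : ℝ) ≤ (hIndex G : ℝ) := by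
  classical
  set h := hIndex G with hh
  have hC : ccdh G (h + 1) ≤ h := by
    by_contra hc
    push Not at hc
    have hle : ccdh G (h + 1) ≤ Fintype.card V := by
      unfold ccdh
      rw [← Nat.card_eq_fintype_card]
      exact Set.ncard_le_card _
    have hmem : h + 1 ∈ (Finset.Icc 1 (Fintype.card V)).filter fun d => d ≤ ccdh G d := by
      rw [Finset.mem_filter, Finset.mem_Icc]
      exact ⟨⟨by omega, by omega⟩, hc⟩
    have h2 : id (h + 1) ≤ hIndex G := Finset.le_sup (f := id) hmem
    simp only [id] at h2
    omega
  have hC' : (Finset.univ.filter fun v => h + 1 ≤ G.degree v).card ≤ h := by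
    rw [← Set.ncard_coe_finset]
    simpa [ccdh] using hC
  have hsum : ∑ v, G.degree v ≤ n * h + h * n := by
    calc ∑ v, G.degree v ≤ ∑ v, (h + if h + 1 ≤ G.degree v then n else 0) := by
          apply Finset.sum_le_sum
          intro v _
          have := G.degree_lt_card_verts v
          split_ifs <;> omega
      _ = n * h + (Finset.univ.filter fun v => h + 1 ≤ G.degree v).card * n := by
          rw [Finset.sum_add_distrib, ← Finset.sum_filter]
          simp [hn]
      _ ≤ _ := by gcongr
  have hm2 : m = G.edgeFinset.card := by
    rw [hm, ← G.coe_edgeFinset, Set.ncard_coe_finset]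
  rw [G.sum_degrees_eq_twice_card_edges, ← hm2] at hsum
  have hfin : m ≤ h * n := by nlinarith
  have hpos : (0 : ℝ) < n := by exact_mod_cast hn1
  rw [div_le_iff₀ hpos]
  exact_mod_cast hfin
end

section
/- Let $M \ge 1$ and $x, y \in \{0,1\}^M$. Define the simple graph $G_{x,y}$ on vertex set $\{0,1,\dots,5M-1\}$ with, for each $i \in \{0,\dots,M-1\}$: the edge $\{5i, 5i+1\}$ if $x_i = 1$ and the edge $\{5i+1, 5i+3\}$ if $x_i = 0$; and the edge $\{5i, 5i+2\}$ if $y_i = 1$ and the edge $\{5i+2, 5i+4\}$ if $y_i = 0$; and no other edges. Then every vertex of $G_{x,y}$ has degree at most $2$, the vertex $5i$ has degree $x_i + y_i$ for each $i$, all other vertices have degree at most $1$, and consequently $C_{G_{x,y}}(2) = |\{i : x_i = 1 \text{ and } y_i = 1\}|$. In particular, if $\sum_{i} x_i y_i = 0$ then $C_{G_{x,y}}(2) = 0$, and if $\sum_i x_i y_i = 1$ then $C_{G_{x,y}}(2) = 1$. -/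
/-- The underlying (asymmetric) edge relation of the gadget graph `G_{x,y}`: for each
`i < M`, the edge `{5i, 5i+1}` if `xᵢ = 1`, the edge `{5i+1, 5i+3}` if `xᵢ = 0`, the
edge `{5i, 5i+2}` if `yᵢ = 1`, and the edge `{5i+2, 5i+4}` if `yᵢ = 0`. -/
def gadgetRel (M : ℕ) (x y : Fin M → ℕ) : Fin (5 * M) → Fin (5 * M) → Prop := fun u w =>
  ∃ i : Fin M,
    (x i = 1 ∧ (u : ℕ) = 5 * (i : ℕ) ∧ (w : ℕ) = 5 * (i : ℕ) + 1) ∨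
    (x i = 0 ∧ (u : ℕ) = 5 * (i : ℕ) + 1 ∧ (w : ℕ) = 5 * (i : ℕ) + 3) ∨
    (y i = 1 ∧ (u : ℕ) = 5 * (i : ℕ) ∧ (w : ℕ) = 5 * (i : ℕ) + 2) ∨
    (y i = 0 ∧ (u : ℕ) = 5 * (i : ℕ) + 2 ∧ (w : ℕ) = 5 * (i : ℕ) + 4)

/-- The gadget graph `G_{x,y}` on vertex set `{0, 1, …, 5M-1}` used in the reduction
from promise set-disjointness. -/
def gadget (M : ℕ) (x y : Fin M → ℕ) : SimpleGraph (Fin (5 * M)) :=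
  SimpleGraph.fromRel (gadgetRel M x y)

noncomputable instance (M : ℕ) (x y : Fin M → ℕ) : DecidableRel (gadget M x y).Adj :=
  Classical.decRel _

theorem gadget_adj_aux (M : ℕ) (x y : Fin M → ℕ) (u w : Fin (5 * M)) (i : Fin M)
    (hi : (u : ℕ) / 5 = i) : (gadget M x y).Adj u w ↔
    ((x i = 1 ∧ (u : ℕ) = 5 * (i : ℕ) ∧ (w : ℕ) = 5 * (i : ℕ) + 1) ∨
    (x i = 0 ∧ (u : ℕ) = 5 * (i : ℕ) + 1 ∧ (w : ℕ) = 5 * (i : ℕ) + 3) ∨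
    (y i = 1 ∧ (u : ℕ) = 5 * (i : ℕ) ∧ (w : ℕ) = 5 * (i : ℕ) + 2) ∨
    (y i = 0 ∧ (u : ℕ) = 5 * (i : ℕ) + 2 ∧ (w : ℕ) = 5 * (i : ℕ) + 4)) ∨
    ((x i = 1 ∧ (w : ℕ) = 5 * (i : ℕ) ∧ (u : ℕ) = 5 * (i : ℕ) + 1) ∨
    (x i = 0 ∧ (w : ℕ) = 5 * (i : ℕ) + 1 ∧ (u : ℕ) = 5 * (i : ℕ) + 3) ∨
    (y i = 1 ∧ (w : ℕ) = 5 * (i : ℕ) ∧ (u : ℕ) = 5 * (i : ℕ) + 2) ∨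
    (y i = 0 ∧ (w : ℕ) = 5 * (i : ℕ) + 2 ∧ (u : ℕ) = 5 * (i : ℕ) + 4)) := by
  unfold gadget
  rw [SimpleGraph.fromRel_adj]
  constructor
  · rintro ⟨-, ⟨j, hj⟩ | ⟨j, hj⟩⟩
    · have : j = i := by
        apply Fin.ext
        omega
      subst this
      exact Or.inl hj
    · have : j = i := by
        apply Fin.ext
        omega
      subst this
      exact Or.inr hj
  · intro h
    refine ⟨?_, h.imp (fun h => ⟨i, h⟩) (fun h => ⟨i, h⟩)⟩
    rintro rfl
    omega

theorem gadget_deg_root (M : ℕ) (x y : Fin M → ℕ)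
    (hx : ∀ i, x i ≤ 1) (hy : ∀ i, y i ≤ 1) (i : Fin M) (u : Fin (5 * M))
    (hu : (u : ℕ) = 5 * (i : ℕ)) : (gadget M x y).degree u = x i + y i := by
  have hi := i.isLt
  let a : Fin (5 * M) := ⟨5 * (i : ℕ) + 1, by omega⟩
  let b : Fin (5 * M) := ⟨5 * (i : ℕ) + 2, by omega⟩
  have hab : a ≠ b := by
    intro h
    have := congrArg Fin.val h
    simp [a, b] at this
  have key : (gadget M x y).neighborFinset u =
      (if x i = 1 then {a} else ∅) ∪ (if y i = 1 then {b} else ∅) := by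
    ext w
    rw [SimpleGraph.mem_neighborFinset, gadget_adj_aux M x y u w i (by omega)]
    have ha : w = a ↔ (w : ℕ) = 5 * i + 1 := by rw [Fin.ext_iff]
    have hb : w = b ↔ (w : ℕ) = 5 * i + 2 := by rw [Fin.ext_iff]
    split_ifs <;> simp only [Finset.mem_union, Finset.mem_singleton, Finset.notMem_empty, ha, hb]
      <;> clear ha hb hab <;> clear_value a b <;> (try simp only [or_false, false_or, iff_false]) <;> omega
  rw [← SimpleGraph.card_neighborFinset_eq_degree, key]
  have h1 := hx i
  have h2 := hy i
  split_ifs with h3 h4 h4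
  · rw [h3, h4]
    simp [hab]
  · simp
    omega
  · simp
    omega
  · simp
    omega

theorem gadget_deg_other (M : ℕ) (x y : Fin M → ℕ) (u : Fin (5 * M))
    (hu : (u : ℕ) % 5 ≠ 0) : (gadget M x y).degree u ≤ 1 := by
  have hlt := u.isLt
  rw [← SimpleGraph.card_neighborFinset_eq_degree, Finset.card_le_one]
  intro v hv w hw
  rw [SimpleGraph.mem_neighborFinset,
    gadget_adj_aux M x y u _ ⟨(u : ℕ) / 5, by omega⟩ rfl] at hv hw
  apply Fin.ext
  dsimp only at hv hw
  omega

/-- **Degrees and ccdh of the gadget graph.** Every vertex of `G_{x,y}` has degree at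
most `2`; the vertex `5i` has degree `xᵢ + yᵢ`; every other vertex has degree at most
`1`; consequently `C(2) = |{i : xᵢ = 1 ∧ yᵢ = 1}|`, so `C(2) = 0` when `∑ᵢ xᵢyᵢ = 0`
and `C(2) = 1` when `∑ᵢ xᵢyᵢ = 1`. -/
theorem gadget_degrees_and_ccdh (M : ℕ) (hM : 1 ≤ M) (x y : Fin M → ℕ)
    (hx : ∀ i, x i ≤ 1) (hy : ∀ i, y i ≤ 1) :
    (∀ u : Fin (5 * M), (gadget M x y).degree u ≤ 2) ∧
    (∀ i : Fin M,
      (gadget M x y).degree ⟨5 * (i : ℕ), by have := i.isLt; omega⟩ = x i + y i) ∧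
    (∀ u : Fin (5 * M), (u : ℕ) % 5 ≠ 0 → (gadget M x y).degree u ≤ 1) ∧
    ccdh (gadget M x y) 2 = {i : Fin M | x i = 1 ∧ y i = 1}.ncard ∧
    ((∑ i, x i * y i) = 0 → ccdh (gadget M x y) 2 = 0) ∧
    ((∑ i, x i * y i) = 1 → ccdh (gadget M x y) 2 = 1) := by
  have hroot := gadget_deg_root M x y hx hy
  have hoth := gadget_deg_other M x y
  have hroot' : ∀ u : Fin (5 * M), (u : ℕ) % 5 = 0 →
      ∃ i : Fin M, (u : ℕ) = 5 * (i : ℕ) ∧ (gadget M x y).degree u = x i + y i := by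
    intro u hu
    have := u.isLt
    have h : (u : ℕ) = 5 * ((u : ℕ) / 5) := by omega
    exact ⟨⟨(u : ℕ) / 5, by omega⟩, h, hroot ⟨(u : ℕ) / 5, by omega⟩ u h⟩
  have hC : ccdh (gadget M x y) 2 = {i : Fin M | x i = 1 ∧ y i = 1}.ncard := by
    unfold ccdh
    let f : Fin M → Fin (5 * M) := fun i => ⟨5 * (i : ℕ), by have := i.isLt; omega⟩
    have hf : Function.Injective f := by
      intro i j h
      have := congrArg Fin.val h
      simp only [f] at this
      apply Fin.ext
      omega
    rw [← Set.ncard_image_of_injective _ hf]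
    congr 1
    ext u
    simp only [Set.mem_setOf_eq, Set.mem_image]
    constructor
    · intro h
      by_cases hu : (u : ℕ) % 5 = 0
      · obtain ⟨i, h1, h2⟩ := hroot' u hu
        have := hx i
        have := hy i
        exact ⟨i, by omega, Fin.ext h1.symm⟩
      · have := hoth u hu
        omega
    · rintro ⟨i, ⟨h1, h2⟩, rfl⟩
      rw [hroot i (f i) rfl]
      omega
  have hS : (∑ i, x i * y i) = {i : Fin M | x i = 1 ∧ y i = 1}.ncard := by
    rw [Set.ncard_eq_toFinset_card', Set.toFinset_setOf, Finset.card_filter]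
    refine Finset.sum_congr rfl fun i _ => ?_
    have h1 := hx i
    have h2 := hy i
    generalize x i = p at *
    generalize y i = q at *
    interval_cases p <;> interval_cases q <;> simp
  refine ⟨?_, fun i => hroot i _ rfl, hoth, hC, fun h => by omega, fun h => by omega⟩
  intro u
  by_cases hu : (u : ℕ) % 5 = 0
  · obtain ⟨i, h1, h2⟩ := hroot' u hu
    have := hx i
    have := hy i
    omega
  · have := hoth u hu
    omega
end

section
/- Let $h, M$ be positive integers with $4 \mid h$ and $M \ge h$, and let $x, y \in \{0,1\}^M$. Define the simple graph $H_{x,y}$ on the disjoint vertex sets $A = \{a_i\}_{i \in \mathbb{Z}_M}$, $B = \{b_i\}_{i \in \mathbb{Z}_M}$, $C = \{c_i\}_{i \in \mathbb{Z}_M}$, $D = \{d_i\}_{i \in \mathbb{Z}_M}$, $E = \{e_i\}_{i \in \mathbb{Z}_M}$ (indices modulo $M$) with edges, for each $i$: if $x_i = 1$, the edges $\{a_i, b_{i+j}\}$ for $0 \le j \le \tfrac{3h}{4}-1$ and $\{d_i, b_{i+j}\}$ for $\tfrac{3h}{4} \le j \le h-1$; if $x_i = 0$, the edges $\{a_i,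 b_{i+j}\}$ for $0 \le j \le \tfrac{h}{4}-1$ and $\{d_i, b_{i+j}\}$ for $\tfrac{h}{4} \le j \le h-1$; and symmetrically with $y$, $C$, $E$ in place of $x$, $B$, $D$; and no other edges. Then: (i) every vertex in $B$ and every vertex in $C$ has degree exactly $h$; (ii) every vertex in $D$ and every vertex in $E$ has degree at most $\tfrac{3h}{4}$; and (iii) $\deg(a_i) = \tfrac{h}{4}(1 + 2x_i) + \tfrac{h}{4}(1 + 2y_i)$, so $\deg(a_i) = \tfrac{3h}{2}$ if $x_i = y_i = 1$ and $\deg(a_i) \le h$ otherwise. -/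
/-- The underlying (asymmetric) edge relation of the h-index-sensitive gadget graph
`H_{x,y}`.  The vertex set consists of five blocks `A, B, C, D, E`, each a copy of
`ZMod M`, encoded as `Fin 5 × ZMod M` with `aᵢ = (0, i)`, `bᵢ = (1, i)`, `cᵢ = (2, i)`,
`dᵢ = (3, i)`, `eᵢ = (4, i)`.  For each `i` (indices mod `M`): if `xᵢ = 1` there are the
edges `{aᵢ, b_{i+j}}` for `0 ≤ j ≤ 3h/4 - 1` and `{dᵢ, b_{i+j}}` for
`3h/4 ≤ j ≤ h - 1`; if `xᵢ = 0` there are the edges `{aᵢ, b_{i+j}}` for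
`0 ≤ j ≤ h/4 - 1` and `{dᵢ, b_{i+j}}` for `h/4 ≤ j ≤ h - 1`; and symmetrically with
`y`, `C`, `E` in place of `x`, `B`, `D`. -/
def hGadgetRel (h M : ℕ) (x y : ZMod M → ℕ) :
    Fin 5 × ZMod M → Fin 5 × ZMod M → Prop := fun u w =>
  ∃ i : ZMod M, ∃ j : ℕ, j < h ∧
    ((u = (0, i) ∧ w = (1, i + (j : ZMod M)) ∧
        ((x i = 1 ∧ j < 3 * h / 4) ∨ (x i = 0 ∧ j < h / 4))) ∨
     (u = (3, i) ∧ w = (1, i + (j : ZMod M)) ∧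
        ((x i = 1 ∧ 3 * h / 4 ≤ j) ∨ (x i = 0 ∧ h / 4 ≤ j))) ∨
     (u = (0, i) ∧ w = (2, i + (j : ZMod M)) ∧
        ((y i = 1 ∧ j < 3 * h / 4) ∨ (y i = 0 ∧ j < h / 4))) ∨
     (u = (4, i) ∧ w = (2, i + (j : ZMod M)) ∧
        ((y i = 1 ∧ 3 * h / 4 ≤ j) ∨ (y i = 0 ∧ h / 4 ≤ j))))

/-- The h-index-sensitive gadget graph `H_{x,y}` used in the reduction from promise
set-disjointness establishing the `Ω(m/h)` lower bound. -/
def hGadget (h M : ℕ) (x y : ZMod M → ℕ) : SimpleGraph (Fin 5 × ZMod M) :=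
  SimpleGraph.fromRel (hGadgetRel h M x y)

noncomputable instance (h M : ℕ) (x y : ZMod M → ℕ) :
    DecidableRel (hGadget h M x y).Adj :=
  Classical.decRel _

theorem cast_inj_aux {h M : ℕ} (hM : h ≤ M) {a b : ℕ} (ha : a < h) (hb : b < h)
    (e : (a : ZMod M) = (b : ZMod M)) : a = b := by
  rw [ZMod.natCast_eq_natCast_iff] at e
  exact Nat.ModEq.eq_of_lt_of_lt e (by omega) (by omega)

theorem condA {k n j : ℕ} (hn : n ≤ 1) :
    ((n = 1 ∧ j < 3 * (4 * k) / 4) ∨ (n = 0 ∧ j < 4 * k / 4)) ↔ j < k * (1 + 2 * n) := by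
  have : n = 0 ∨ n = 1 := by omega
  rcases this with rfl | rfl <;> simp <;> omega

theorem condD {k n j : ℕ} (hn : n ≤ 1) :
    ((n = 1 ∧ 3 * (4 * k) / 4 ≤ j) ∨ (n = 0 ∧ 4 * k / 4 ≤ j)) ↔ k * (1 + 2 * n) ≤ j := by
  have : n = 0 ∨ n = 1 := by omega
  rcases this with rfl | rfl <;> simp <;> omega

theorem rel_iff {k M : ℕ} {x y : ZMod M → ℕ} (hx : ∀ i, x i ≤ 1) (hy : ∀ i, y i ≤ 1)
    (u w : Fin 5 × ZMod M) : hGadgetRel (4 * k) M x y u w ↔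
    ∃ j : ℕ, j < 4 * k ∧ w.2 = u.2 + (j : ZMod M) ∧
     ((u.1 = 0 ∧ w.1 = 1 ∧ j < k * (1 + 2 * x u.2)) ∨
      (u.1 = 3 ∧ w.1 = 1 ∧ k * (1 + 2 * x u.2) ≤ j) ∨
      (u.1 = 0 ∧ w.1 = 2 ∧ j < k * (1 + 2 * y u.2)) ∨
      (u.1 = 4 ∧ w.1 = 2 ∧ k * (1 + 2 * y u.2) ≤ j)) := by
  obtain ⟨p, a⟩ := u
  obtain ⟨q, b⟩ := w
  unfold hGadgetRel
  simp only [condA (hx _), condD (hx _), condA (hy _), condD (hy _), Prod.mk.injEq]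
  constructor
  · rintro ⟨i, j, hj, H⟩
    refine ⟨j, hj, ?_⟩
    rcases H with ⟨⟨rfl, rfl⟩, ⟨rfl, rfl⟩, H⟩ | ⟨⟨rfl, rfl⟩, ⟨rfl, rfl⟩, H⟩ |
      ⟨⟨rfl, rfl⟩, ⟨rfl, rfl⟩, H⟩ | ⟨⟨rfl, rfl⟩, ⟨rfl, rfl⟩, H⟩ <;> simp [H]
  · rintro ⟨j, hj, e, H⟩
    refine ⟨a, j, hj, ?_⟩
    tauto

theorem adj_iff {k M : ℕ} {x y : ZMod M → ℕ} (hx : ∀ i, x i ≤ 1) (hy : ∀ i, y i ≤ 1)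
    (u w : Fin 5 × ZMod M) : (hGadget (4 * k) M x y).Adj u w ↔
    (hGadgetRel (4 * k) M x y u w ∨ hGadgetRel (4 * k) M x y w u) := by
  unfold hGadget
  rw [SimpleGraph.fromRel_adj]
  constructor
  · exact fun h => h.2
  · intro h
    refine ⟨?_, h⟩
    rintro rfl
    simp only [rel_iff hx hy, or_self] at h
    obtain ⟨j, _, _, h⟩ := h
    rcases h with ⟨h1, h2, _⟩ | ⟨h1, h2, _⟩ | ⟨h1, h2, _⟩ | ⟨h1, h2, _⟩ <;>
      · rw [h1] at h2
        exact absurd h2 (by decide)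

theorem thr_le {k n : ℕ} (hn : n ≤ 1) : k ≤ k * (1 + 2 * n) ∧ k * (1 + 2 * n) ≤ 3 * k := by
  have : n = 0 ∨ n = 1 := by omega
  rcases this with rfl | rfl <;> omega


theorem degB {k M : ℕ} [NeZero M] (hM : 4 * k ≤ M) {x y : ZMod M → ℕ}
    (hx : ∀ i, x i ≤ 1) (hy : ∀ i, y i ≤ 1) (i : ZMod M) : (hGadget (4 * k) M x y).degree (1, i) = 4 * k := by
  classical
  rw [← SimpleGraph.card_neighborFinset_eq_degree]
  have : (hGadget (4 * k) M x y).neighborFinset (1, i) = (Finset.range (4 * k)).image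
      (fun j : ℕ => ((if j < k * (1 + 2 * x (i - (j : ZMod M))) then (0 : Fin 5) else 3),
        i - (j : ZMod M))) := by
    ext ⟨p, b⟩
    simp only [SimpleGraph.mem_neighborFinset, adj_iff hx hy, rel_iff hx hy, Finset.mem_image,
      Finset.mem_range, Prod.mk.injEq]
    constructor
    · rintro (⟨j, hj, e, H⟩ | ⟨j, hj, e, H⟩)
      · simp at H
      · refine ⟨j, hj, ?_⟩
        have e2 : i - (j : ZMod M) = b := by rw [e]; ring
        rw [e2]
        refine ⟨?_, rfl⟩
        simp at H
        rcases H with ⟨rfl, H⟩ | ⟨rfl, H⟩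
        · simp [H]
        · simp [Nat.not_lt.mpr H]
    · rintro ⟨j, hj, e1, rfl⟩
      right
      refine ⟨j, hj, by ring, ?_⟩
      split_ifs at e1 with hc
      · subst e1; simp [hc]
      · subst e1; simp [Nat.not_lt.mp hc]
  rw [this, Finset.card_image_of_injOn, Finset.card_range]
  intro a ha b hb e
  simp only [Prod.mk.injEq, sub_right_inj] at e
  simp only [Finset.coe_range, Set.mem_Iio] at ha hb
  exact cast_inj_aux hM ha hb e.2

theorem degC {k M : ℕ} [NeZero M] (hM : 4 * k ≤ M) {x y : ZMod M → ℕ}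
    (hx : ∀ i, x i ≤ 1) (hy : ∀ i, y i ≤ 1) (i : ZMod M) : (hGadget (4 * k) M x y).degree (2, i) = 4 * k := by
  classical
  rw [← SimpleGraph.card_neighborFinset_eq_degree]
  have : (hGadget (4 * k) M x y).neighborFinset (2, i) = (Finset.range (4 * k)).image
      (fun j : ℕ => ((if j < k * (1 + 2 * y (i - (j : ZMod M))) then (0 : Fin 5) else 4),
        i - (j : ZMod M))) := by
    ext ⟨p, b⟩
    simp only [SimpleGraph.mem_neighborFinset, adj_iff hx hy, rel_iff hx hy, Finset.mem_image,
      Finset.mem_range, Prod.mk.injEq]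
    constructor
    · rintro (⟨j, hj, e, H⟩ | ⟨j, hj, e, H⟩)
      · simp at H
      · refine ⟨j, hj, ?_⟩
        have e2 : i - (j : ZMod M) = b := by rw [e]; ring
        rw [e2]
        refine ⟨?_, rfl⟩
        simp at H
        rcases H with ⟨rfl, H⟩ | ⟨rfl, H⟩
        · simp [H]
        · simp [Nat.not_lt.mpr H]
    · rintro ⟨j, hj, e1, rfl⟩
      right
      refine ⟨j, hj, by ring, ?_⟩
      split_ifs at e1 with hc
      · subst e1; simp [hc]
      · subst e1; simp [Nat.not_lt.mp hc]
  rw [this, Finset.card_image_of_injOn, Finset.card_range]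
  intro a ha b hb e
  simp only [Prod.mk.injEq, sub_right_inj] at e
  simp only [Finset.coe_range, Set.mem_Iio] at ha hb
  exact cast_inj_aux hM ha hb e.2

theorem degD {k M : ℕ} [NeZero M] {x y : ZMod M → ℕ}
    (hx : ∀ i, x i ≤ 1) (hy : ∀ i, y i ≤ 1) (i : ZMod M) : (hGadget (4 * k) M x y).degree (3, i) ≤ 3 * k := by
  classical
  rw [← SimpleGraph.card_neighborFinset_eq_degree]
  have : (hGadget (4 * k) M x y).neighborFinset (3, i) ⊆
      (Finset.Ico (k * (1 + 2 * x i)) (4 * k)).image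
      (fun j : ℕ => ((1 : Fin 5), i + (j : ZMod M))) := by
    rintro ⟨p, b⟩
    simp only [SimpleGraph.mem_neighborFinset, adj_iff hx hy, rel_iff hx hy, Finset.mem_image,
      Finset.mem_Ico, Prod.mk.injEq]
    rintro (⟨j, hj, e, H⟩ | ⟨j, hj, e, H⟩)
    · simp at H
      exact ⟨j, ⟨H.2, hj⟩, H.1.symm, e.symm⟩
    · simp at H
  have h1 := (Finset.card_le_card this).trans Finset.card_image_le
  rw [Nat.card_Ico] at h1
  have := thr_le (k := k) (hx i)
  omega

theorem degE {k M : ℕ} [NeZero M] {x y : ZMod M → ℕ}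
    (hx : ∀ i, x i ≤ 1) (hy : ∀ i, y i ≤ 1) (i : ZMod M) : (hGadget (4 * k) M x y).degree (4, i) ≤ 3 * k := by
  classical
  rw [← SimpleGraph.card_neighborFinset_eq_degree]
  have : (hGadget (4 * k) M x y).neighborFinset (4, i) ⊆
      (Finset.Ico (k * (1 + 2 * y i)) (4 * k)).image
      (fun j : ℕ => ((2 : Fin 5), i + (j : ZMod M))) := by
    rintro ⟨p, b⟩
    simp only [SimpleGraph.mem_neighborFinset, adj_iff hx hy, rel_iff hx hy, Finset.mem_image,
      Finset.mem_Ico, Prod.mk.injEq]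
    rintro (⟨j, hj, e, H⟩ | ⟨j, hj, e, H⟩)
    · simp at H
      exact ⟨j, ⟨H.2, hj⟩, H.1.symm, e.symm⟩
    · simp at H
  have h1 := (Finset.card_le_card this).trans Finset.card_image_le
  rw [Nat.card_Ico] at h1
  have := thr_le (k := k) (hy i)
  omega

theorem degA {k M : ℕ} [NeZero M] (hM : 4 * k ≤ M) {x y : ZMod M → ℕ}
    (hx : ∀ i, x i ≤ 1) (hy : ∀ i, y i ≤ 1) (i : ZMod M) : (hGadget (4 * k) M x y).degree (0, i) =
    k * (1 + 2 * x i) + k * (1 + 2 * y i) := by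
  classical
  rw [← SimpleGraph.card_neighborFinset_eq_degree]
  have tx := thr_le (k := k) (hx i)
  have ty := thr_le (k := k) (hy i)
  have : (hGadget (4 * k) M x y).neighborFinset (0, i) =
      (Finset.range (k * (1 + 2 * x i))).image (fun j : ℕ => ((1 : Fin 5), i + (j : ZMod M))) ∪
      (Finset.range (k * (1 + 2 * y i))).image (fun j : ℕ => ((2 : Fin 5), i + (j : ZMod M))) := by
    ext ⟨p, b⟩
    simp only [SimpleGraph.mem_neighborFinset, adj_iff hx hy, rel_iff hx hy, Finset.mem_image,
      Finset.mem_range, Prod.mk.injEq, Finset.mem_union]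
    constructor
    · rintro (⟨j, hj, e, H⟩ | ⟨j, hj, e, H⟩)
      · simp at H
        rcases H with ⟨rfl, H⟩ | ⟨rfl, H⟩
        · exact Or.inl ⟨j, H, rfl, e.symm⟩
        · exact Or.inr ⟨j, H, rfl, e.symm⟩
      · simp at H
    · rintro (⟨j, hj, rfl, rfl⟩ | ⟨j, hj, rfl, rfl⟩)
      · exact Or.inl ⟨j, by omega, rfl, by simp [hj]⟩
      · exact Or.inl ⟨j, by omega, rfl, by simp [hj]⟩
  rw [this, Finset.card_union_of_disjoint, Finset.card_image_of_injOn, Finset.card_range,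
    Finset.card_image_of_injOn, Finset.card_range]
  · intro a ha b hb e
    simp only [Prod.mk.injEq, add_right_inj] at e
    simp only [Finset.coe_range, Set.mem_Iio] at ha hb
    exact cast_inj_aux hM (by omega) (by omega) e.2
  · intro a ha b hb e
    simp only [Prod.mk.injEq, add_right_inj] at e
    simp only [Finset.coe_range, Set.mem_Iio] at ha hb
    exact cast_inj_aux hM (by omega) (by omega) e.2
  · rw [Finset.disjoint_left]
    intro a ha hb
    simp only [Finset.mem_image] at ha hb
    obtain ⟨j, _, rfl⟩ := ha
    obtain ⟨j', _, e⟩ := hb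
    simp at e

/-- **Degrees of the h-index-sensitive gadget graph.** (i) Every vertex in `B` and in
`C` has degree exactly `h`; (ii) every vertex in `D` and in `E` has degree at most
`3h/4`; (iii) `deg(aᵢ) = (h/4)(1 + 2xᵢ) + (h/4)(1 + 2yᵢ)`, so `deg(aᵢ) = 3h/2` if
`xᵢ = yᵢ = 1` and `deg(aᵢ) ≤ h` otherwise. -/
theorem hGadget_degrees (h M : ℕ) [NeZero M] (hh : 0 < h) (h4 : 4 ∣ h) (hM : h ≤ M)
    (x y : ZMod M → ℕ) (hx : ∀ i, x i ≤ 1) (hy : ∀ i, y i ≤ 1) :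
    (∀ i : ZMod M, (hGadget h M x y).degree (1, i) = h) ∧
    (∀ i : ZMod M, (hGadget h M x y).degree (2, i) = h) ∧
    (∀ i : ZMod M, (hGadget h M x y).degree (3, i) ≤ 3 * h / 4) ∧
    (∀ i : ZMod M, (hGadget h M x y).degree (4, i) ≤ 3 * h / 4) ∧
    (∀ i : ZMod M,
      (hGadget h M x y).degree (0, i) = h / 4 * (1 + 2 * x i) + h / 4 * (1 + 2 * y i)) ∧
    (∀ i : ZMod M, x i = 1 → y i = 1 → (hGadget h M x y).degree (0, i) = 3 * h / 2) ∧
    (∀ i : ZMod M, ¬(x i = 1 ∧ y i = 1) → (hGadget h M x y).degree (0, i) ≤ h) := by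
  obtain ⟨k, rfl⟩ := h4
  have e1 : 4 * k / 4 = k := by omega
  have e2 : 3 * (4 * k) / 4 = 3 * k := by omega
  rw [e1, e2]
  refine ⟨degB hM hx hy, degC hM hx hy, degD hx hy, degE hx hy, degA hM hx hy, ?_, ?_⟩
  · intro i h1 h2
    rw [degA hM hx hy, h1, h2]
    omega
  · intro i hn
    rw [degA hM hx hy]
    have h1 := hx i
    have h2 := hy i
    have h3 : (x i = 0 ∧ y i = 0) ∨ (x i = 0 ∧ y i = 1) ∨ (x i = 1 ∧ y i = 0) := by omega
    rcases h3 with ⟨h3, h4⟩ | ⟨h3, h4⟩ | ⟨h3, h4⟩ <;> rw [h3, h4] <;> omega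
end
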